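/- Let E ⊂ ℝ² be compact and 0 < s ≤ 2. Then Cap_L(E) ≥ c(s) · (ℋ^s_∞(E))^{1/s}, where Cap_L is the logarithmic capacity. -/

import Mathlib

open MeasureTheory Metric
open scoped ENNReal Classical

/-- The `s`-dimensional Hausdorff content `ℋ^s_∞`. -/
noncomputable def hContent {X : Type*} [EMetricSpace X] (s : ℝ) (E : Set X) : ℝ≥0∞ :=
  ⨅ (A : ℕ → Set X) (_ : E ⊆ ⋃ i, A i), ∑' i, EMetric.diam (A i) ^ s

/-- The logarithmic energy `∬ log(1/|x-y|) dμ(x) dμ(y)`, as an extended real number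
(positive part minus negative part; the kernel is `+∞` on the diagonal). -/
noncomputable def logEnergy (μ : Measure (EuclideanSpace ℝ (Fin 2))) : EReal :=
  ((∫⁻ p : EuclideanSpace ℝ (Fin 2) × EuclideanSpace ℝ (Fin 2),
      (if p.1 = p.2 then ⊤ else ENNReal.ofReal (Real.log (1 / dist p.1 p.2)))
      ∂(μ.prod μ) : ℝ≥0∞) : EReal)
  - ((∫⁻ p : EuclideanSpace ℝ (Fin 2) × EuclideanSpace ℝ (Fin 2),
      ENNReal.ofReal (Real.log (dist p.1 p.2)) ∂(μ.prod μ) : ℝ≥0∞) : EReal)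

/-- The Robin constant `V(F) = inf ∬ log(1/|x-y|) dμ dμ`, the infimum over probability
measures supported on `F`.  Note `V(F) = 2π / Cap₀(F)` where `Cap₀` is the Wiener capacity
`Cap₀(F) = (inf_μ ∬ (1/2π) log(1/|x−y|) dμ dμ)⁻¹`. -/
noncomputable def wienerV (F : Set (EuclideanSpace ℝ (Fin 2))) : EReal :=
  ⨅ (μ : Measure (EuclideanSpace ℝ (Fin 2))) (_ : IsProbabilityMeasure μ) (_ : μ Fᶜ = 0),
    logEnergy μ

/-- The logarithmic capacity `Cap_L(F) = exp(−2π/Cap₀(F)) = exp(−V(F))`. -/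
noncomputable def logCap (F : Set (EuclideanSpace ℝ (Fin 2))) : ℝ :=
  if wienerV F = ⊤ then 0 else Real.exp (-(wienerV F).toReal)


section Helpers

open Filter Topology

lemma hContent_le_finset {X : Type*} [EMetricSpace X] {s : ℝ} (hs : 0 < s) (E : Set X)
    (u : Finset X) (B : X → Set X) (h : E ⊆ ⋃ x ∈ u, B x) :
    hContent s E ≤ ∑ x ∈ u, EMetric.diam (B x) ^ s := by
  classical
  let e := u.equivFin
  let A : ℕ → Set X := fun k => if h : k < u.card then B (e.symm ⟨k, h⟩) else ∅
  have hA : E ⊆ ⋃ i, A i := by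
    intro x hx
    have := h hx
    simp only [Set.mem_iUnion] at this ⊢
    obtain ⟨y, hy, hxy⟩ := this
    refine ⟨e ⟨y, hy⟩, ?_⟩
    simp only [A, (e ⟨y, hy⟩).2, dif_pos, Fin.eta, Equiv.symm_apply_apply]
    exact hxy
  refine (iInf₂_le A hA).trans ?_
  rw [tsum_eq_sum (s := Finset.range u.card)]
  · rw [← Fin.sum_univ_eq_sum_range (fun i => EMetric.diam (A i) ^ s)]
    rw [← Finset.sum_coe_sort u]
    apply le_of_eq
    rw [← Equiv.sum_comp e.symm]
    apply Finset.sum_congr rfl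
    intro i _
    simp [A, i.2]
  · intro b hb
    have : ¬ b < u.card := by simpa using hb
    have h0 : EMetric.diam (A b) = 0 := by
      simp only [A, this, dif_neg, not_false_eq_true]
      exact Metric.ediam_empty
    rw [h0, ENNReal.zero_rpow_of_pos hs]

/-- Cartan-type lemma. -/
lemma exists_good_point {X : Type*} [MetricSpace X] {s : ℝ} (hs : 0 < s) (E : Set X)
    {R : ℝ} (hR : 0 < R) (hH : ENNReal.ofReal (R ^ s) ≤ hContent s E) (n : ℕ) (z : ℕ → X) :
    ∃ x ∈ E, ∀ r > 0, (((Finset.range n).filter (fun i => dist x (z i) ≤ r)).card : ℝ)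
      ≤ 10 ^ s * n * (r / R) ^ s := by
  classical
  by_contra! hcon
  choose! r hr0 hr using hcon
  have h10 : (1 : ℝ) ≤ 10 ^ s := Real.one_le_rpow (by norm_num) hs.le
  have hcard : ∀ x, (((Finset.range n).filter (fun i => dist x (z i) ≤ r x)).card : ℝ) ≤ n := by
    intro x
    have := Finset.card_filter_le (Finset.range n) (fun i => dist x (z i) ≤ r x)
    rw [Finset.card_range] at this
    exact_mod_cast this
  have hrR : ∀ x ∈ E, r x ≤ R := by
    intro x hx
    by_contra! hlt
    have h1 : 1 ≤ (r x / R) ^ s := Real.one_le_rpow ((one_le_div hR).2 hlt.le) hs.le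
    have h2 := (hr x hx).trans_le (hcard x)
    have h3 : (1 : ℝ) ≤ 10 ^ s * (r x / R) ^ s := one_le_mul_of_one_le_of_one_le h10 h1
    have h4 : (0 : ℝ) ≤ n := Nat.cast_nonneg n
    nlinarith
  obtain ⟨u, huE, hdisj, hcov⟩ := Vitali.exists_disjoint_subfamily_covering_enlargement_closedBall
    E (fun x : X => x) r R hrR 5 (by norm_num)
  have hpick : ∀ x ∈ u, ∃ i, i < n ∧ dist x (z i) ≤ r x := by
    intro x hx
    have h1 := hr x (huE hx)
    have h2 : (0 : ℝ) ≤ 10 ^ s * n * (r x / R) ^ s := by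
      have := hr0 x (huE hx)
      positivity
    have h3 : 0 < ((Finset.range n).filter (fun i => dist x (z i) ≤ r x)).card := by
      exact_mod_cast h2.trans_lt h1
    obtain ⟨i, hi⟩ := Finset.card_pos.1 h3
    simp at hi
    exact ⟨i, hi⟩
  choose! p hp1 hp2 using hpick
  have hinj : Set.InjOn p u := by
    intro x hx y hy hxy
    by_contra hne
    have := hdisj hx hy hne
    refine Set.disjoint_left.1 this (?_ : z (p x) ∈ _) ?_
    · simpa [dist_comm] using hp2 x hx
    · rw [hxy]; simpa [dist_comm] using hp2 y hy
  have hfin : u.Finite := by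
    refine Set.Finite.of_finite_image (f := p) ?_ hinj
    refine (Set.finite_Iio n).subset ?_
    rintro _ ⟨x, hx, rfl⟩
    exact hp1 x hx
  lift u to Finset X using hfin
  simp only [Finset.mem_coe] at *
  have hle : hContent s E ≤ ENNReal.ofReal (∑ x ∈ u, (10 * r x) ^ s) := by
    refine (hContent_le_finset hs E u (fun x => closedBall x (5 * r x)) ?_).trans ?_
    · intro x hx
      obtain ⟨b, hb, hsub⟩ := hcov x hx
      simp only [Set.mem_iUnion]
      exact ⟨b, hb, hsub (mem_closedBall_self (hr0 x hx).le)⟩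
    · rw [ENNReal.ofReal_sum_of_nonneg]
      · apply Finset.sum_le_sum
        intro x hx
        have h0 := hr0 x (huE hx)
        rw [← ENNReal.ofReal_rpow_of_nonneg (by positivity) hs.le]
        apply ENNReal.rpow_le_rpow _ hs.le
        apply Metric.ediam_le
        intro a ha b hb
        rw [edist_dist]
        apply ENNReal.ofReal_le_ofReal
        have := dist_triangle_right a b x
        rw [mem_closedBall] at ha hb
        linarith
      · intro x hx
        have h0 := hr0 x (huE hx)
        positivity
  have hlt : ∑ x ∈ u, (10 * r x) ^ s < R ^ s := by
    rcases u.eq_empty_or_nonempty with rfl | hne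
    · simp; positivity
    · have h1 : ∑ x ∈ u, (10 : ℝ) ^ s * n * (r x / R) ^ s <
          ∑ x ∈ u, (((Finset.range n).filter (fun i => dist x (z i) ≤ r x)).card : ℝ) :=
        Finset.sum_lt_sum_of_nonempty hne (fun x hx => hr x (huE hx))
      have h2 : ∑ x ∈ u, ((Finset.range n).filter (fun i => dist x (z i) ≤ r x)).card ≤ n := by
        rw [← Finset.card_biUnion]
        · calc _ ≤ (Finset.range n).card := by
                apply Finset.card_le_card
                intro i hi
                simp at hi
                obtain ⟨a, _, ha, _⟩ := hi
                simpa using ha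
            _ = n := by simp
        · intro x hx y hy hxy
          rw [Function.onFun, Finset.disjoint_left]
          intro i hi hi'
          simp at hi hi'
          refine Set.disjoint_left.1 (hdisj hx hy hxy) (?_ : z i ∈ _) ?_
          · simpa [dist_comm] using hi.2
          · simpa [dist_comm] using hi'.2
      have h3 : ∑ x ∈ u, (10 : ℝ) ^ s * n * (r x / R) ^ s < n :=
        h1.trans_le (by exact_mod_cast h2)
      have hn : (0 : ℝ) < n := by
        obtain ⟨x, hx⟩ := hne
        have := hp1 x hx
        exact_mod_cast (Nat.zero_le _).trans_lt this
      have h4 : ∑ x ∈ u, (10 : ℝ) ^ s * n * (r x / R) ^ s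
          = n / R ^ s * ∑ x ∈ u, (10 * r x) ^ s := by
        rw [Finset.mul_sum]
        apply Finset.sum_congr rfl
        intro x hx
        have h0 := hr0 x (huE hx)
        rw [Real.div_rpow h0.le hR.le, Real.mul_rpow (by norm_num) h0.le]
        ring
      rw [h4] at h3
      have hRs : 0 < R ^ s := by positivity
      rw [div_mul_eq_mul_div, div_lt_iff₀ hRs] at h3
      exact lt_of_mul_lt_mul_left h3 hn.le
  have := (hH.trans hle)
  rw [ENNReal.ofReal_le_ofReal_iff (by
    apply Finset.sum_nonneg
    intro x hx
    have h0 := hr0 x (huE hx)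
    positivity)] at this
  linarith

/-- truncated logarithmic kernel -/
noncomputable def kM (M : ℝ) (d : ℝ) : ℝ := -Real.log (max d (Real.exp (-M)))

lemma kM_le (M d : ℝ) : kM M d ≤ M := by
  have : Real.log (Real.exp (-M)) ≤ Real.log (max d (Real.exp (-M))) :=
    Real.log_le_log (Real.exp_pos _) (le_max_right _ _)
  rw [Real.log_exp] at this
  unfold kM; linarith

lemma kM_cont (M : ℝ) : Continuous (kM M) := by
  unfold kM
  refine (Continuous.log (by fun_prop) ?_).neg
  intro x
  exact (lt_of_lt_of_le (Real.exp_pos _) (le_max_right _ _)).ne'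

lemma sum_kM_le {s : ℝ} (hs : 0 < s) {R C : ℝ} (hR : 0 < R) (hC : 0 ≤ C) (n : ℕ) (d : ℕ → ℝ)
    (h : ∀ r > 0, (((Finset.range n).filter (fun i => d i ≤ r)).card : ℝ)
      ≤ C * n * (r / R) ^ s) (M : ℝ) :
    ∑ i ∈ Finset.range n, kM M (d i) ≤ n * (-Real.log R + C * (1 - Real.exp (-s))⁻¹) := by
  classical
  obtain ⟨K, hK⟩ := exists_nat_ge (M + Real.log R)
  have hpt : ∀ i, kM M (d i) ≤ -Real.log R +
      ∑ k ∈ Finset.range K, (if d i ≤ R * Real.exp (-(k : ℝ)) then (1 : ℝ) else 0) := by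
    intro i
    set t := kM M (d i) + Real.log R with ht
    have htK : t ≤ K := by have := kM_le M (d i); linarith
    suffices t ≤ ∑ k ∈ Finset.range K,
      (if d i ≤ R * Real.exp (-(k : ℝ)) then (1 : ℝ) else 0) by linarith
    have hsub : Finset.range ⌈t⌉₊ ⊆
        (Finset.range K).filter (fun k : ℕ => d i ≤ R * Real.exp (-(k : ℝ))) := by
      intro k hk
      rw [Finset.mem_range, Nat.lt_ceil] at hk
      rw [Finset.mem_filter, Finset.mem_range]
      refine ⟨by exact_mod_cast hk.trans_le htK, ?_⟩
      have hpos : 0 < max (d i) (Real.exp (-M)) :=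
        lt_of_lt_of_le (Real.exp_pos _) (le_max_right _ _)
      have : Real.log (max (d i) (Real.exp (-M))) ≤ Real.log R + -(k : ℝ) := by
        simp only [ht, kM] at hk; linarith
      calc d i ≤ max (d i) (Real.exp (-M)) := le_max_left _ _
        _ = Real.exp (Real.log (max (d i) (Real.exp (-M)))) := (Real.exp_log hpos).symm
        _ ≤ Real.exp (Real.log R + -(k : ℝ)) := Real.exp_le_exp.2 this
        _ = _ := by rw [Real.exp_add, Real.exp_log hR]
    have h2 := Finset.card_le_card hsub
    rw [Finset.card_range] at h2
    rw [Finset.sum_ite, Finset.sum_const_zero, add_zero, Finset.sum_const, nsmul_eq_mul, mul_one]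
    exact (Nat.le_ceil t).trans (by exact_mod_cast h2)
  have hn : (0 : ℝ) ≤ n := Nat.cast_nonneg n
  have hx1 : Real.exp (-s) < 1 := by rw [Real.exp_lt_one_iff]; linarith
  calc ∑ i ∈ Finset.range n, kM M (d i)
      ≤ ∑ i ∈ Finset.range n, (-Real.log R +
      ∑ k ∈ Finset.range K, (if d i ≤ R * Real.exp (-(k : ℝ)) then (1 : ℝ) else 0)) :=
        Finset.sum_le_sum fun i _ => hpt i
    _ = n * (-Real.log R) + ∑ k ∈ Finset.range K, ∑ i ∈ Finset.range n,
          (if d i ≤ R * Real.exp (-(k : ℝ)) then (1 : ℝ) else 0) := by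
        rw [Finset.sum_add_distrib, Finset.sum_comm]; simp
    _ ≤ n * (-Real.log R) + ∑ k ∈ Finset.range K, C * n * (Real.exp (-s)) ^ k := by
        gcongr with k hk
        rw [Finset.sum_ite, Finset.sum_const_zero, add_zero, Finset.sum_const, nsmul_eq_mul,
          mul_one]
        refine (h (R * Real.exp (-(k : ℝ))) (by positivity)).trans (le_of_eq ?_)
        rw [mul_div_cancel_left₀ _ hR.ne', ← Real.exp_mul, ← Real.exp_nat_mul]
        congr 2; ring
    _ ≤ n * (-Real.log R) + C * n * (1 - Real.exp (-s))⁻¹ := by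
        rw [← Finset.mul_sum]
        gcongr
        rw [← tsum_geometric_of_lt_one (Real.exp_pos _).le hx1]
        exact (summable_geometric_of_lt_one (Real.exp_pos _).le hx1).sum_le_tsum _
          (fun i _ => by positivity)
    _ = _ := by ring

noncomputable def mkSeq {X : Type*} (f : ℕ → (ℕ → X) → X) (d : X) : ℕ → X
  | n => f n (fun i => if _h : i < n then mkSeq f d i else d)

lemma sum_sq_le {X : Type*} (k : X → X → ℝ) (hsym : ∀ x y, k x y = k y x) (z : ℕ → X) (M A : ℝ)
    (hd : ∀ x, k x x ≤ M) (h : ∀ n, ∑ i ∈ Finset.range n, k (z n) (z i) ≤ n * A) (N : ℕ) :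
    ∑ i ∈ Finset.range N, ∑ j ∈ Finset.range N, k (z i) (z j) ≤ N * M + N * (N - 1) * A := by
  induction N with
  | zero => simp
  | succ N ih =>
    simp only [Finset.sum_range_succ, Finset.sum_add_distrib]
    have h1 : ∑ i ∈ Finset.range N, k (z i) (z N) = ∑ i ∈ Finset.range N, k (z N) (z i) :=
      Finset.sum_congr rfl fun i _ => hsym _ _
    rw [h1]
    have h2 := h N
    have h3 := hd (z N)
    push_cast
    nlinarith

noncomputable def empM {X : Type*} [MeasurableSpace X] (z : ℕ → X) (n : ℕ) : Measure X :=
  ((n + 1 : ℕ) : ℝ≥0∞)⁻¹ • ∑ i ∈ Finset.range (n + 1), Measure.dirac (z i)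

instance {X : Type*} [MeasurableSpace X] (z : ℕ → X) (n : ℕ) :
    IsProbabilityMeasure (empM z n) := by
  constructor
  simp only [empM, Measure.smul_apply, Measure.coe_finsetSum, Finset.sum_apply, measure_univ,
    Finset.sum_const, Finset.card_range, smul_eq_mul, nsmul_eq_mul, mul_one]
  exact ENNReal.inv_mul_cancel (by simp) (ENNReal.natCast_ne_top _)

lemma integral_empM {X : Type*} [TopologicalSpace X] [CompactSpace X]
    [MeasurableSpace X] [BorelSpace X]
    (z : ℕ → X) (n : ℕ) (f : X → ℝ) (hf : Continuous f) :
    ∫ x, f x ∂(empM z n) = ((n + 1 : ℕ) : ℝ)⁻¹ * ∑ i ∈ Finset.range (n + 1), f (z i) := by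
  rw [empM, integral_smul_measure, integral_finsetSum_measure]
  · have : ∀ i, ∫ x, f x ∂(Measure.dirac (z i)) = f (z i) := fun i =>
      integral_dirac' _ _ hf.measurable.stronglyMeasurable
    simp only [this, ENNReal.toReal_inv, ENNReal.toReal_natCast, smul_eq_mul]
  · intro i _
    exact hf.integrable_of_hasCompactSupport (HasCompactSupport.of_compactSpace f)

lemma exists_limit {X : Type*} [MetricSpace X] [CompactSpace X]
    [MeasurableSpace X] [BorelSpace X] (z : ℕ → X) (A : ℝ)
    (h : ∀ M : ℝ, 0 ≤ M → ∀ n, ∑ i ∈ Finset.range n, kM M (dist (z n) (z i)) ≤ n * A) :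
    ∃ μ : Measure X, IsProbabilityMeasure μ ∧ ∀ M : ℝ, 0 ≤ M →
      ∫ p, kM M (dist p.1 p.2) ∂(μ.prod μ) ≤ A := by
  let P : ℕ → ProbabilityMeasure X := fun n => ⟨empM z n, inferInstance⟩
  let U : Ultrafilter ℕ := hyperfilter ℕ
  obtain ⟨μ, -, hμ⟩ := isCompact_univ.ultrafilter_le_nhds (U.map P) (by simp)
  have hμ' : Tendsto P U (𝓝 μ) := hμ
  refine ⟨μ, inferInstance, fun M hM => ?_⟩
  have hprod : Tendsto (fun n => (P n).prod (P n)) U (𝓝 (μ.prod μ)) :=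
    (ProbabilityMeasure.continuous_prod.tendsto (μ, μ)).comp (hμ'.prodMk_nhds hμ')
  have hc : Continuous (fun p : X × X => kM M (dist p.1 p.2)) :=
    (kM_cont M).comp (by fun_prop)
  have hint := (ProbabilityMeasure.tendsto_iff_forall_integral_tendsto.1 hprod)
    (BoundedContinuousFunction.mkOfCompact ⟨_, hc⟩)
  simp only [ProbabilityMeasure.toMeasure_prod, BoundedContinuousFunction.mkOfCompact_apply,
    ContinuousMap.coe_mk] at hint
  have hlim : Tendsto (fun n : ℕ => A + (M - A) * (1 / ((n : ℝ) + 1))) U (𝓝 (A + (M - A) * 0)) :=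
    (tendsto_const_nhds.add (tendsto_const_nhds.mul
      tendsto_one_div_add_atTop_nhds_zero_nat)).mono_left Nat.hyperfilter_le_atTop
  rw [mul_zero, add_zero] at hlim
  refine le_of_tendsto_of_tendsto' hint hlim ?_
  intro n
  change ∫ p, kM M (dist p.1 p.2) ∂((empM z n).prod (empM z n)) ≤ _
  rw [integral_prod _ (hc.integrable_of_hasCompactSupport (HasCompactSupport.of_compactSpace _))]
  have h1 : ∀ x, ∫ y, kM M (dist x y) ∂(empM z n) =
      ((n + 1 : ℕ) : ℝ)⁻¹ * ∑ j ∈ Finset.range (n + 1), kM M (dist x (z j)) := fun x =>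
    integral_empM z n _ ((kM_cont M).comp (by fun_prop))
  simp only [h1]
  rw [integral_empM z n _ (by
    refine continuous_const.mul (continuous_finsetSum _ fun i _ => ?_)
    exact (kM_cont M).comp (by fun_prop))]
  rw [← Finset.mul_sum]
  have h2 := sum_sq_le (fun x y => kM M (dist x y)) (fun x y => by rw [dist_comm]) z M A
    (fun x => kM_le _ _) (h M hM) (n + 1)
  have hn : (0 : ℝ) < n + 1 := by positivity
  calc _ ≤ ((n + 1 : ℕ) : ℝ)⁻¹ * (((n + 1 : ℕ) : ℝ)⁻¹ *
        ((n + 1 : ℕ) * M + (n + 1 : ℕ) * ((n + 1 : ℕ) - 1) * A)) := by gcongr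
    _ = _ := by
      push_cast
      field_simp
      ring

end Helpers

section Final

open Filter Topology

lemma ofReal_kM {d M : ℝ} (hM : 0 ≤ M) (hd : 0 < d) :
    ENNReal.ofReal (kM M d) = min (ENNReal.ofReal (Real.log (1 / d))) (ENNReal.ofReal M) := by
  rw [← ENNReal.ofReal_min]
  congr 1
  unfold kM
  rw [one_div, Real.log_inv]
  rcases le_total d (Real.exp (-M)) with h | h
  · rw [max_eq_right h, Real.log_exp]
    have := Real.log_le_log hd h
    rw [Real.log_exp] at this
    rw [min_eq_right (by linarith)]; ring
  · rw [max_eq_left h]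
    have := Real.log_le_log (Real.exp_pos _) h
    rw [Real.log_exp] at this
    rw [min_eq_left (by linarith)]

lemma ofReal_kM_zero {M : ℝ} : ENNReal.ofReal (kM M 0) = ENNReal.ofReal M := by
  unfold kM
  rw [max_eq_right (Real.exp_pos _).le, Real.log_exp, neg_neg]

lemma ofReal_neg_kM {d M : ℝ} (hM : 0 ≤ M) (hd : 0 ≤ d) :
    ENNReal.ofReal (-kM M d) = ENNReal.ofReal (Real.log d) := by
  unfold kM
  rw [neg_neg]
  have hM1 : Real.exp (-M) ≤ 1 := by rw [Real.exp_le_one_iff]; linarith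
  rcases le_total d (Real.exp (-M)) with h | h
  · rw [max_eq_right h, Real.log_exp, ENNReal.ofReal_of_nonpos (by linarith),
      ENNReal.ofReal_of_nonpos (Real.log_nonpos hd (h.trans hM1))]
  · rw [max_eq_left h]

lemma energy_le {X : Type*} [MetricSpace X] [CompactSpace X]
    [MeasurableSpace X] [BorelSpace X] (μ : Measure X) [IsProbabilityMeasure μ] (A : ℝ)
    (h : ∀ M : ℝ, 0 ≤ M → ∫ p, kM M (dist p.1 p.2) ∂(μ.prod μ) ≤ A) :
    ((∫⁻ p : X × X, (if p.1 = p.2 then ⊤ else ENNReal.ofReal (Real.log (1 / dist p.1 p.2)))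
      ∂(μ.prod μ) : ℝ≥0∞) : EReal)
    - ((∫⁻ p : X × X, ENNReal.ofReal (Real.log (dist p.1 p.2)) ∂(μ.prod μ) : ℝ≥0∞) : EReal)
      ≤ (A : EReal) := by
  set N : ℝ≥0∞ := ∫⁻ p : X × X, ENNReal.ofReal (Real.log (dist p.1 p.2)) ∂(μ.prod μ) with hN
  set K : X × X → ℝ≥0∞ := fun p =>
    (if p.1 = p.2 then ⊤ else ENNReal.ofReal (Real.log (1 / dist p.1 p.2))) with hK
  have hKM : ∀ M : ℝ, 0 ≤ M → ∀ p : X × X,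
      ENNReal.ofReal (kM M (dist p.1 p.2)) = min (K p) (ENNReal.ofReal M) := by
    intro M hM p
    by_cases hp : p.1 = p.2
    · simp only [hK, hp, if_true, dist_self, ofReal_kM_zero]
      simp
    · simp only [hK, hp, if_false]
      exact ofReal_kM hM (dist_pos.2 hp)
  have hint : ∀ M : ℝ, Integrable (fun p : X × X => kM M (dist p.1 p.2)) (μ.prod μ) := by
    intro M
    have hc : Continuous (fun p : X × X => kM M (dist p.1 p.2)) :=
      (kM_cont M).comp (by fun_prop)
    exact hc.integrable_of_hasCompactSupport (HasCompactSupport.of_compactSpace _)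
  have hNeq : ∀ M : ℝ, 0 ≤ M →
      ∫⁻ p : X × X, ENNReal.ofReal (-kM M (dist p.1 p.2)) ∂(μ.prod μ) = N := by
    intro M hM
    rw [hN]
    exact lintegral_congr fun p => ofReal_neg_kM hM dist_nonneg
  have hNfin : N ≠ ⊤ := by
    rw [← hNeq 0 le_rfl]
    exact (hint 0).neg.lintegral_lt_top.ne
  have hbd : ∀ n : ℕ, ∫⁻ p, min (K p) (ENNReal.ofReal n) ∂(μ.prod μ)
      ≤ ENNReal.ofReal (A + N.toReal) := by
    intro n
    have h0 : (0 : ℝ) ≤ n := Nat.cast_nonneg n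
    have h1 := h n h0
    rw [integral_eq_lintegral_pos_part_sub_lintegral_neg_part (hint n), hNeq n h0] at h1
    simp only [hKM n h0] at h1
    have hfin : ∫⁻ p, min (K p) (ENNReal.ofReal n) ∂(μ.prod μ) ≠ ⊤ := by
      simp only [← hKM n h0]
      exact (hint n).lintegral_lt_top.ne
    rw [← ENNReal.ofReal_toReal hfin]
    exact ENNReal.ofReal_le_ofReal (by linarith)
  have hAN : 0 ≤ A + N.toReal := by
    have h1 := h 0 le_rfl
    rw [integral_eq_lintegral_pos_part_sub_lintegral_neg_part (hint 0), hNeq 0 le_rfl] at h1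
    have := ENNReal.toReal_nonneg
      (a := ∫⁻ p : X × X, ENNReal.ofReal (kM 0 (dist p.1 p.2)) ∂(μ.prod μ))
    linarith
  have hKle : ∫⁻ p, K p ∂(μ.prod μ) ≤ ENNReal.ofReal (A + N.toReal) := by
    have hsup : ∀ p, K p = ⨆ n : ℕ, min (K p) (ENNReal.ofReal n) := by
      intro p
      have : (⨆ n : ℕ, ENNReal.ofReal (n : ℝ)) = ⊤ := by
        simpa using ENNReal.iSup_natCast
      rw [← inf_iSup_eq, this]; simp
    have : ∫⁻ p, K p ∂(μ.prod μ) = ∫⁻ p, ⨆ n : ℕ, min (K p) (ENNReal.ofReal n) ∂(μ.prod μ) :=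
      lintegral_congr hsup
    rw [this, lintegral_iSup]
    · exact iSup_le hbd
    · intro n
      have h0 : (0 : ℝ) ≤ n := Nat.cast_nonneg n
      simp only [← hKM n h0]
      have hc : Continuous (fun p : X × X => kM n (dist p.1 p.2)) :=
        (kM_cont n).comp (by fun_prop)
      exact (ENNReal.continuous_ofReal.comp hc).measurable
    · intro m n hmn p
      exact min_le_min_left _ (ENNReal.ofReal_le_ofReal (by exact_mod_cast hmn))
  have hNc : (N : EReal) = ((N.toReal : ℝ) : EReal) := (EReal.coe_ennreal_toReal hNfin).symm
  have hle : ((∫⁻ p, K p ∂(μ.prod μ) : ℝ≥0∞) : EReal) ≤ ((A + N.toReal : ℝ) : EReal) := by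
    refine (EReal.coe_ennreal_le_coe_ennreal_iff.2 hKle).trans (le_of_eq ?_)
    rw [EReal.coe_ennreal_ofReal, max_eq_left hAN]
  rw [hNc]
  refine (EReal.sub_le_sub hle le_rfl).trans (le_of_eq ?_)
  rw [← EReal.coe_sub]
  simp

lemma wienerV_ne_bot {E : Set (EuclideanSpace ℝ (Fin 2))} (hE : IsCompact E) :
    wienerV E ≠ ⊥ := by
  have hlow : ((-diam E : ℝ) : EReal) ≤ wienerV E := by
    unfold wienerV
    refine le_iInf fun μ => le_iInf fun hμ => le_iInf fun hμE => ?_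
    have hN : ∫⁻ p : EuclideanSpace ℝ (Fin 2) × EuclideanSpace ℝ (Fin 2),
        ENNReal.ofReal (Real.log (dist p.1 p.2)) ∂(μ.prod μ) ≤ ENNReal.ofReal (diam E) := by
      have hae : ∀ᵐ x ∂μ, x ∈ E := by
        rw [ae_iff]; exact hμE
      have h1 : ∀ᵐ p ∂(μ.prod μ), p.1 ∈ E := Measure.quasiMeasurePreserving_fst.ae hae
      have h2 : ∀ᵐ p ∂(μ.prod μ), p.2 ∈ E := Measure.quasiMeasurePreserving_snd.ae hae
      calc _ ≤ ∫⁻ p, ENNReal.ofReal (diam E) ∂(μ.prod μ) := by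
            apply lintegral_mono_ae
            filter_upwards [h1, h2] with p hp1 hp2
            apply ENNReal.ofReal_le_ofReal
            exact (Real.log_le_self dist_nonneg).trans
              (dist_le_diam_of_mem hE.isBounded hp1 hp2)
        _ = _ := by simp
    unfold logEnergy
    have h3 := EReal.coe_ennreal_le_coe_ennreal_iff.2 hN
    rw [EReal.coe_ennreal_ofReal, max_eq_left diam_nonneg] at h3
    refine le_trans (le_of_eq ?_) (EReal.sub_le_sub (EReal.coe_ennreal_nonneg _) h3)
    simp
  intro h
  rw [h] at hlow
  exact (EReal.coe_ne_bot _) (le_bot_iff.1 hlow)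

lemma wienerV_le {s : ℝ} (hs : 0 < s) {E : Set (EuclideanSpace ℝ (Fin 2))} (hE : IsCompact E)
    {R : ℝ} (hR : 0 < R) (hH : ENNReal.ofReal (R ^ s) ≤ hContent s E) :
    wienerV E ≤ ((-Real.log R + 10 ^ s * (1 - Real.exp (-s))⁻¹ : ℝ) : EReal) := by
  have : CompactSpace E := isCompact_iff_compactSpace.1 hE
  choose f hfE hf using fun (n : ℕ) (z : ℕ → EuclideanSpace ℝ (Fin 2)) =>
    exists_good_point hs E hR hH n z
  let z : ℕ → E := mkSeq (fun n w => ⟨f n (fun i => (w i : EuclideanSpace ℝ (Fin 2))), hfE _ _⟩)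
    ⟨f 0 0, hfE _ _⟩
  have hz : ∀ n, ∀ r > 0, (((Finset.range n).filter (fun i => dist (z n) (z i) ≤ r)).card : ℝ)
      ≤ 10 ^ s * n * (r / R) ^ s := by
    intro n r hr
    let w : ℕ → E := fun i => if _h : i < n then z i else ⟨f 0 0, hfE _ _⟩
    have hzn : (z n : EuclideanSpace ℝ (Fin 2)) = f n (fun i => (w i : EuclideanSpace ℝ (Fin 2))) := by
      simp only [z, w]
      rw [mkSeq]
    have h1 := hf n (fun i => (w i : EuclideanSpace ℝ (Fin 2))) r hr
    rw [← hzn] at h1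
    have h2 : (Finset.range n).filter (fun i => dist (z n) (z i) ≤ r) =
        (Finset.range n).filter
          (fun i => dist (z n : EuclideanSpace ℝ (Fin 2)) (w i : EuclideanSpace ℝ (Fin 2)) ≤ r) := by
      apply Finset.filter_congr
      intro i hi
      rw [Finset.mem_range] at hi
      simp only [w, hi, dif_pos, Subtype.dist_eq]
    rw [h2]
    exact h1
  obtain ⟨μ, hμ, hμA⟩ := exists_limit z (-Real.log R + 10 ^ s * (1 - Real.exp (-s))⁻¹)
    (fun M _ n => sum_kM_le hs hR (by positivity) n (fun i => dist (z n) (z i)) (hz n) M)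
  have hen := energy_le μ _ hμA
  have hmeas : Measurable (Subtype.val : E → EuclideanSpace ℝ (Fin 2)) := measurable_subtype_coe
  have hprob : IsProbabilityMeasure (μ.map (Subtype.val : E → EuclideanSpace ℝ (Fin 2))) :=
    Measure.isProbabilityMeasure_map hmeas.aemeasurable
  have hsupp : (μ.map (Subtype.val : E → EuclideanSpace ℝ (Fin 2))) Eᶜ = 0 := by
    rw [Measure.map_apply hmeas hE.measurableSet.compl]
    simp
  unfold wienerV
  refine iInf_le_of_le _ (iInf_le_of_le hprob (iInf_le_of_le hsupp ?_))
  unfold logEnergy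
  rw [Measure.map_prod_map _ _ hmeas hmeas]
  rw [lintegral_map _ (hmeas.prodMap hmeas), lintegral_map _ (hmeas.prodMap hmeas)]
  · simpa [Subtype.dist_eq, Subtype.ext_iff] using hen
  · fun_prop
  · refine Measurable.ite ?_ measurable_const (by fun_prop)
    exact measurableSet_eq_fun measurable_fst measurable_snd

end Final

/-- for compact `E ⊂ ℝ²` and `0 < s ≤ 2`,
`Cap_L(E) ≥ c(s) · (ℋ^s_∞(E))^{1/s}`. -/
theorem stmt_3 (s : ℝ) (hs : 0 < s) (hs2 : s ≤ 2) :
    ∃ c : ℝ, 0 < c ∧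
      ∀ E : Set (EuclideanSpace ℝ (Fin 2)), IsCompact E →
        c * (hContent s E).toReal ^ (1 / s) ≤ logCap E := by
  refine ⟨Real.exp (-(10 ^ s * (1 - Real.exp (-s))⁻¹)), Real.exp_pos _, fun E hE => ?_⟩
  have hcap : 0 ≤ logCap E := by
    unfold logCap
    split_ifs
    · exact le_rfl
    · exact (Real.exp_pos _).le
  rcases (ENNReal.toReal_nonneg (a := hContent s E)).eq_or_lt with h0 | hpos
  · rw [← h0, Real.zero_rpow (by positivity), mul_zero]
    exact hcap
  set R := (hContent s E).toReal ^ (1 / s) with hRdef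
  have hR : 0 < R := by positivity
  have hRs : R ^ s = (hContent s E).toReal := by
    rw [hRdef, ← Real.rpow_mul hpos.le, one_div, inv_mul_cancel₀ hs.ne', Real.rpow_one]
  have hV := wienerV_le hs hE hR (by rw [hRs]; exact ENNReal.ofReal_toReal_le)
  have hne : wienerV E ≠ ⊤ := fun h => by
    rw [h] at hV
    exact (EReal.coe_ne_top _) (top_le_iff.1 hV)
  have hV' := EReal.toReal_le_toReal hV (wienerV_ne_bot hE) (EReal.coe_ne_top _)
  rw [EReal.toReal_coe] at hV'
  unfold logCap
  rw [if_neg hne]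
  calc _ = Real.exp (-(10 ^ s * (1 - Real.exp (-s))⁻¹)) * Real.exp (Real.log R) := by
        rw [Real.exp_log hR]
    _ = Real.exp (-(10 ^ s * (1 - Real.exp (-s))⁻¹) + Real.log R) := (Real.exp_add _ _).symm
    _ ≤ _ := Real.exp_le_exp.2 (by linarith)
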